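/- Let α, β ∈ ℂ with Re(α) > Re(β) > 0, let φ ∈ C¹[a,b] with φ′ > 0 on [a,b], and let f ∈ L¹(a,b). Then D_{a+}^{β,φ} I_{a+}^{α,φ} f(x) = I_{a+}^{α−β,φ} f(x) holds for almost every x ∈ [a,b]. -/

import Mathlib

open MeasureTheory Filter Set Finset Topology

noncomputable section

namespace FracDE

/-- The `φ`-derivative operator `f ↦ (1/φ′) f′`. -/
def phiD (φ : ℝ → ℝ) (f : ℝ → ℂ) : ℝ → ℂ :=
  fun x => ((deriv φ x : ℝ) : ℂ)⁻¹ * deriv f x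

/-- The Riemann–Liouville fractional integral of order `α` with respect to `φ`, based at `a`:
`(I_{a+}^{α,φ} f)(x) = (1/Γ(α)) ∫_a^x φ′(t) (φ(x) − φ(t))^{α−1} f(t) dt`. -/
def RLI (α : ℂ) (a : ℝ) (φ : ℝ → ℝ) (f : ℝ → ℂ) (x : ℝ) : ℂ :=
  (Complex.Gamma α)⁻¹ *
    ∫ t in a..x, ((deriv φ t : ℝ) : ℂ) * (((φ x - φ t : ℝ) : ℂ) ^ (α - 1)) * f t

/-- `n = ⌊Re α⌋ + 1`. -/
def rlN (α : ℂ) : ℕ := ⌊α.re⌋.toNat + 1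

/-- The Riemann–Liouville fractional derivative of order `α` with respect to `φ`:
`(D_{a+}^{α,φ} f)(x) = ((1/φ′(x)) d/dx)^n (I_{a+}^{n−α,φ} f)(x)`, `n = ⌊Re α⌋ + 1`. -/
def RLD (α : ℂ) (a : ℝ) (φ : ℝ → ℝ) (f : ℝ → ℂ) : ℝ → ℂ :=
  (phiD φ)^[rlN α] (RLI ((rlN α : ℂ) - α) a φ f)

open Classical in
/-- The integer `n` used in the modified Caputo-type derivative:
`n = α` if `α ∈ ℕ`, and `n = ⌊Re α⌋ + 1` otherwise. -/
def capN (α : ℂ) : ℕ := if ∃ n : ℕ, α = n then ⌊α.re⌋.toNat else ⌊α.re⌋.toNat + 1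

/-- The Taylor-type polynomial `Σ_{j<n} ((1/φ′) d/dt)^j f (a) / j! · (φ(t) − φ(a))^j`. -/
def phiTaylor (n : ℕ) (a : ℝ) (φ : ℝ → ℝ) (f : ℝ → ℂ) (t : ℝ) : ℂ :=
  ∑ j ∈ Finset.range n, ((phiD φ)^[j] f a / (Nat.factorial j : ℂ)) * ((φ t - φ a : ℝ) : ℂ) ^ j

/-- The modified Caputo-type fractional derivative with respect to `φ`. -/
def CapD (α : ℂ) (a : ℝ) (φ : ℝ → ℝ) (f : ℝ → ℂ) : ℝ → ℂ :=
  RLD α a φ (fun t => f t - phiTaylor (capN α) a φ f t)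

/-- `φ ∈ C¹[a,b]` with `φ′ > 0` on `[a,b]`. -/
structure IsC1Pos (φ : ℝ → ℝ) (a b : ℝ) : Prop where
  deriv_at : ∀ t ∈ Set.Icc a b, HasDerivAt φ (deriv φ t) t
  continuous_deriv : ContinuousOn (deriv φ) (Set.Icc a b)
  deriv_pos : ∀ t ∈ Set.Icc a b, 0 < deriv φ t

/-- The sup-norm on `[0,T]`. -/
def maxNorm (T : ℝ) (f : ℝ → ℂ) : ℝ := sSup ((fun t => ‖f t‖) '' Set.Icc 0 T)

/-- Membership in the space `C^{n₀−1,β₀}[0,T]`. -/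
def MemCspace (T : ℝ) (φ : ℝ → ℝ) (β0 : ℂ) (x : ℝ → ℂ) : Prop :=
  ContDiffOn ℝ (rlN β0 - 1 : ℕ) x (Set.Icc 0 T) ∧
    ContinuousOn (CapD β0 0 φ x) (Set.Icc 0 T)

/-- The norm of the space `C^{n₀−1,β₀}[0,T]`. -/
def normCspace (T : ℝ) (φ : ℝ → ℝ) (β0 : ℂ) (x : ℝ → ℂ) : ℝ :=
  (∑ k ∈ Finset.range (rlN β0), maxNorm T ((phiD φ)^[k] x)) + maxNorm T (CapD β0 0 φ x)

/-- The ordering assumptions on the orders `β₀, …, β_m`: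
`Re β₀ > Re β₁ > … > Re β_m ≥ 0`, and `β_m = 0` whenever `Re β_m = 0`. -/
def BetaChain (m : ℕ) (β : ℕ → ℂ) : Prop :=
  (∀ i < m, (β (i + 1)).re < (β i).re) ∧ 0 ≤ (β m).re ∧ ((β m).re = 0 → β m = 0)

/-- `x` solves `^C D^{β₀,φ} x(t) + Σ_{i=1}^m d_i(t) ^C D^{β_i,φ} x(t) = h(t)` on `[0,T]`. -/
def SolvesE (T : ℝ) (φ : ℝ → ℝ) (m : ℕ) (β : ℕ → ℂ) (d : ℕ → ℝ → ℂ) (h x : ℝ → ℂ) : Prop :=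
  ∀ t ∈ Set.Icc 0 T,
    CapD (β 0) 0 φ x t + ∑ i ∈ Finset.Icc 1 m, d i t * CapD (β i) 0 φ x t = h t

/-- The initial conditions `((1/φ′) d/dt)^k x (0+) = c_k`, `k = 0, …, n₀−1`. -/
def InitCond (φ : ℝ → ℝ) (n0 : ℕ) (c : ℕ → ℂ) (x : ℝ → ℂ) : Prop :=
  ∀ k < n0, Filter.Tendsto ((phiD φ)^[k] x) (nhdsWithin 0 (Set.Ioi 0)) (nhds (c k))

/-- The growth condition (G): there are `ν > 0` and `0 < C < 1` with
`Σ_{i=1}^m bound_i ‖(I^{β₀−β_i,φ} e^{ν·})(t)‖ ≤ C e^{ν t}` on `[0,T]`. -/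
def GrowthCond (T : ℝ) (φ : ℝ → ℝ) (m : ℕ) (β : ℕ → ℂ) (bound : ℕ → ℝ) : Prop :=
  ∃ ν : ℝ, 0 < ν ∧ ∃ C : ℝ, 0 < C ∧ C < 1 ∧ ∀ t ∈ Set.Icc 0 T,
    ∑ i ∈ Finset.Icc 1 m,
      bound i * ‖RLI (β 0 - β i) 0 φ (fun s => (Real.exp (ν * s) : ℂ)) t‖
      ≤ C * Real.exp (ν * t)

/-- The operator `f ↦ Σ_{i=1}^m d_i(·) I^{β₀−β_i,φ} f`. -/
def opS (φ : ℝ → ℝ) (m : ℕ) (β : ℕ → ℂ) (d : ℕ → ℝ → ℂ) (f : ℝ → ℂ) : ℝ → ℂ :=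
  fun t => ∑ i ∈ Finset.Icc 1 m, d i t * RLI (β 0 - β i) 0 φ f t

/-- The successive-approximation sequence `x₀ = I^{β₀,φ} h`,
`x_n = x₀ − I^{β₀,φ} Σ_i d_i ^C D^{β_i,φ} x_{n−1}`. -/
def apxSeq (φ : ℝ → ℝ) (m : ℕ) (β : ℕ → ℂ) (d : ℕ → ℝ → ℂ) (h : ℝ → ℂ) : ℕ → ℝ → ℂ
  | 0 => RLI (β 0) 0 φ h
  | n + 1 => fun t => RLI (β 0) 0 φ h t -
      RLI (β 0) 0 φ
        (fun s => ∑ i ∈ Finset.Icc 1 m, d i s * CapD (β i) 0 φ (apxSeq φ m β d h n) s) t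

/-- `Ψ_j(t) = (φ(t) − φ(0))^j / Γ(j+1)`. -/
def Psi (φ : ℝ → ℝ) (j : ℕ) (t : ℝ) : ℂ :=
  ((φ t - φ 0 : ℝ) : ℂ) ^ j / (Nat.factorial j : ℂ)

/-- The set `K_j = {i : 1 ≤ i ≤ m, Re β_i ≤ j}`. -/
def Kset (m : ℕ) (β : ℕ → ℂ) (j : ℕ) : Set ℕ :=
  {i : ℕ | 1 ≤ i ∧ i ≤ m ∧ (β i).re ≤ (j : ℝ)}

/-- `ϰ_j = min K_j`. -/
def kappa (m : ℕ) (β : ℕ → ℂ) (j : ℕ) : ℕ := sInf (Kset m β j)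

/-- `X` is a canonical set of solutions of the homogeneous equation (E₀). -/
def IsCanonicalSet (T : ℝ) (φ : ℝ → ℝ) (m : ℕ) (β : ℕ → ℂ) (d : ℕ → ℝ → ℂ)
    (X : ℕ → ℝ → ℂ) : Prop :=
  ∀ j < rlN (β 0),
    SolvesE T φ m β d (fun _ => 0) (X j) ∧
    ∀ k < rlN (β 0),
      Filter.Tendsto ((phiD φ)^[k] (X j)) (nhdsWithin 0 (Set.Ioi 0))
        (nhds (if k = j then 1 else 0))

/-- The multivariate Mittag-Leffler function `E_{(a₁,…,a_n),b}(z₁,…,z_n)`. -/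
def mvML (n : ℕ) (a : Fin n → ℂ) (b : ℂ) (z : Fin n → ℂ) : ℂ :=
  ∑' k : ℕ, ∑ l ∈ Finset.Nat.antidiagonalTuple n k,
    (Nat.multinomial Finset.univ l : ℂ) * (∏ i, z i ^ l i) /
      Complex.Gamma (b + ∑ i, a i * (l i : ℂ))

/-- `g ∈ AC^n[a,b]`: the `(n−1)`-st derivative of `g` is absolutely continuous on `[a,b]`. -/
def ACn (n : ℕ) (a b : ℝ) (g : ℝ → ℂ) : Prop :=
  ContDiffOn ℝ (n - 1 : ℕ) g (Set.Icc a b) ∧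
  ∃ g' : ℝ → ℂ, IntervalIntegrable g' volume a b ∧
    ∀ x ∈ Set.Icc a b, iteratedDeriv (n - 1) g x = iteratedDeriv (n - 1) g a + ∫ t in a..x, g' t

end FracDE

/-!
The substitution `u = φ t` turns `I_{a+}^{γ,φ}` into convolution on the line with the kernel
`u₊ ^ (γ - 1) / Γ(γ)`, applied to functions vanishing to the left of `φ a`. The Beta integral says
that these kernels form a convolution semigroup, hence so do the integrals. The kernel of order one
is the Heaviside function, so raising the order by one is taking a primitive. With
`n = ⌊Re β⌋ + 1`, the function `I^{n-β} I^α f = I^{α-β+n} f` is therefore an `n`-fold primitive of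
`I^{α-β} f`: the first `n - 1` derivatives exist everywhere because integrals of order above one are
continuous, the last one exists almost everywhere by Lebesgue's differentiation theorem, and null
sets pull back to null sets along `φ`.
-/

namespace FracDE

open ContinuousLinearMap

open scoped Convolution

/-- The kernel `u ↦ u₊ ^ (γ - 1) / Γ(γ)` of fractional integration of order `γ` on the line. It
vanishes on `(-∞, 0]`, so that convolution with it only looks at the past. -/
def rlKernel (γ : ℂ) : ℝ → ℂ :=
  (Set.Ioi 0).indicator fun u => (Complex.Gamma γ)⁻¹ * (u : ℂ) ^ (γ - 1)

section Kernel

variable {γ δ : ℂ} {u : ℝ}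

lemma rlKernel_of_pos (γ : ℂ) (hu : 0 < u) :
    rlKernel γ u = (Complex.Gamma γ)⁻¹ * (u : ℂ) ^ (γ - 1) :=
  Set.indicator_of_mem (Set.mem_Ioi.2 hu) _

lemma rlKernel_of_nonpos (γ : ℂ) (hu : u ≤ 0) : rlKernel γ u = 0 :=
  Set.indicator_of_notMem (Set.notMem_Ioi.2 hu) _

lemma rlKernel_ne_zero (hγ : 0 < γ.re) (hu : 0 < u) : rlKernel γ u ≠ 0 := by
  rw [rlKernel_of_pos γ hu]
  refine mul_ne_zero (inv_ne_zero (Complex.Gamma_ne_zero_of_re_pos hγ)) ?_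
  rw [Ne, Complex.cpow_eq_zero_iff]
  exact fun h => hu.ne' (Complex.ofReal_eq_zero.1 h.1)

@[fun_prop]
lemma measurable_rlKernel (γ : ℂ) : Measurable (rlKernel γ) :=
  Measurable.indicator (by fun_prop) measurableSet_Ioi

lemma norm_rlKernel_of_pos (γ : ℂ) (hu : 0 < u) :
    ‖rlKernel γ u‖ = ‖Complex.Gamma γ‖⁻¹ * u ^ (γ.re - 1) := by
  rw [rlKernel_of_pos γ hu, norm_mul, norm_inv, Complex.norm_cpow_eq_rpow_re_of_pos hu,
    Complex.sub_re, Complex.one_re]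

lemma norm_rlKernel_le (hγ : 1 ≤ γ.re) {R : ℝ} (hR : 0 ≤ R) (hu : u ≤ R) :
    ‖rlKernel γ u‖ ≤ ‖Complex.Gamma γ‖⁻¹ * R ^ (γ.re - 1) := by
  rcases le_or_gt u 0 with hu0 | hu0
  · rw [rlKernel_of_nonpos γ hu0, norm_zero]
    positivity
  · rw [norm_rlKernel_of_pos γ hu0]
    have := sub_nonneg.2 hγ
    gcongr

lemma ofReal_norm_rlKernel (hγ : 0 < γ.re) (u : ℝ) :
    (‖rlKernel γ u‖ : ℂ) =
      (Real.Gamma γ.re / ‖Complex.Gamma γ‖ : ℝ) * rlKernel γ.re u := by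
  rcases le_or_gt u 0 with hu | hu
  · simp [rlKernel_of_nonpos _ hu]
  · have hΓ : (Real.Gamma γ.re : ℂ) ≠ 0 := Complex.ofReal_ne_zero.2 (Real.Gamma_pos_of_pos hγ).ne'
    rw [norm_rlKernel_of_pos γ hu, rlKernel_of_pos _ hu, Complex.Gamma_ofReal, Complex.ofReal_mul,
      Complex.ofReal_cpow hu.le, Complex.ofReal_sub, Complex.ofReal_div, Complex.ofReal_inv,
      Complex.ofReal_one]
    field_simp

lemma integrable_indicator_Iic_rlKernel (hγ : 0 < γ.re) (R : ℝ) :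
    Integrable ((Set.Iic R).indicator (rlKernel γ)) := by
  have hpow : IntervalIntegrable (fun u : ℝ => (u : ℂ) ^ (γ - 1)) volume 0 R :=
    intervalIntegral.intervalIntegrable_cpow' (by simpa using hγ)
  rw [rlKernel, Set.indicator_indicator, Set.inter_comm, Set.Ioi_inter_Iic,
    integrable_indicator_iff measurableSet_Ioc]
  exact hpow.1.const_mul _

lemma rlKernel_convolution (hγ : 0 < γ.re) (hδ : 0 < δ.re) :
    rlKernel γ ⋆[mul ℝ ℂ] rlKernel δ = rlKernel (γ + δ) := by
  rw [rlKernel, rlKernel, ← posConvolution_eq_convolution_indicator _ _ (mul ℝ ℂ) volume,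
    posConvolution, rlKernel]
  refine Set.indicator_congr fun x (hx : 0 < x) => ?_
  have h := Complex.betaIntegral_scaled γ δ hx
  rw [Complex.betaIntegral_eq_Gamma_mul_div γ δ hγ hδ] at h
  have hΓγ := Complex.Gamma_ne_zero_of_re_pos hγ
  have hΓδ := Complex.Gamma_ne_zero_of_re_pos hδ
  simp only [mul_apply', Complex.ofReal_sub, mul_mul_mul_comm _ _ (Complex.Gamma δ)⁻¹,
    intervalIntegral.integral_const_mul, h]
  field_simp

lemma convolutionExists_rlKernel (hγ : 0 < γ.re) (hδ : 0 < δ.re) :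
    ConvolutionExists (rlKernel γ) (rlKernel δ) (mul ℝ ℂ) := by
  intro x
  rcases le_or_gt x 0 with hx | hx
  · refine (integrable_zero ℝ ℂ volume).congr (.of_forall fun t => ?_)
    rcases le_or_gt t 0 with ht | ht
    · simp [rlKernel_of_nonpos γ ht]
    · simp [rlKernel_of_nonpos δ (show x - t ≤ 0 by linarith)]
  · -- The Beta integral is nonzero, whereas a non-integrable integrand would give the value `0`.
    refine Integrable.of_integral_ne_zero ?_
    rw [← convolution_def, rlKernel_convolution hγ hδ]
    exact rlKernel_ne_zero (Complex.add_re γ δ ▸ add_pos hγ hδ) hx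

lemma exists_norm_rlKernel_convolution_eq (hγ : 0 < γ.re) (hδ : 0 < δ.re) :
    ∃ C : ℝ, ∀ x, ((‖rlKernel γ ·‖) ⋆[mul ℝ ℝ] (‖rlKernel δ ·‖)) x = C * ‖rlKernel (γ + δ) x‖ := by
  let c (η : ℂ) : ℝ := Real.Gamma η.re / ‖Complex.Gamma η‖
  have hγδ : 0 < (γ + δ).re := Complex.add_re γ δ ▸ add_pos hγ hδ
  have hc : c (γ + δ) ≠ 0 := div_ne_zero (Real.Gamma_pos_of_pos hγδ).ne'
    (norm_ne_zero_iff.2 (Complex.Gamma_ne_zero_of_re_pos hγδ))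
  refine ⟨c γ * c δ / c (γ + δ), fun x => Complex.ofReal_injective ?_⟩
  have hreal : (rlKernel γ.re ⋆[mul ℝ ℂ] rlKernel δ.re) x = rlKernel (γ + δ).re x := by
    rw [rlKernel_convolution (by simpa using hγ) (by simpa using hδ), Complex.add_re,
      Complex.ofReal_add]
  calc ((((‖rlKernel γ ·‖) ⋆[mul ℝ ℝ] (‖rlKernel δ ·‖)) x : ℝ) : ℂ)
      = c γ * c δ * (rlKernel γ.re ⋆[mul ℝ ℂ] rlKernel δ.re) x := by
        simp only [convolution_def, mul_apply', ← integral_complex_ofReal, Complex.ofReal_mul,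
          ofReal_norm_rlKernel hγ, ofReal_norm_rlKernel hδ, c, ← integral_const_mul]
        exact integral_congr_ae (.of_forall fun t => mul_mul_mul_comm _ _ _ _)
    _ = (c γ * c δ / c (γ + δ) * ‖rlKernel (γ + δ) x‖ : ℝ) := by
        push_cast
        rw [hreal, ofReal_norm_rlKernel hγδ, ← mul_assoc, div_mul_cancel₀]
        exact Complex.ofReal_ne_zero.2 hc

end Kernel

/-- The Liouville fractional integral of order `γ`, i.e. fractional integration over the whole past
`(-∞, x)`. Riemann-Liouville integrals based at `A` are its values on functions vanishing to the
left of `A`. -/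
def liouvilleIntegral (γ : ℂ) (g : ℝ → ℂ) : ℝ → ℂ :=
  g ⋆[mul ℝ ℂ] rlKernel γ

section Liouville

variable {γ δ : ℂ} {g : ℝ → ℂ} {A : ℝ}

lemma liouvilleIntegral_apply (γ : ℂ) (g : ℝ → ℂ) (x : ℝ) :
    liouvilleIntegral γ g x = ∫ t, g t * rlKernel γ (x - t) :=
  rfl

lemma liouvilleIntegral_congr {h : ℝ → ℂ} {x : ℝ} (hgh : Set.EqOn g h (Set.Iio x)) :
    liouvilleIntegral γ g x = liouvilleIntegral γ h x := by
  rw [liouvilleIntegral_apply, liouvilleIntegral_apply]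
  congr 1 with t
  rcases lt_or_ge t x with ht | ht
  · rw [hgh ht]
  · rw [rlKernel_of_nonpos γ (sub_nonpos.2 ht), mul_zero, mul_zero]

lemma support_liouvilleIntegral_subset (γ : ℂ) (hA : Function.support g ⊆ Set.Ici A) :
    Function.support (liouvilleIntegral γ g) ⊆ Set.Ici A := by
  refine Function.support_subset_iff'.2 fun x hx => ?_
  have hgx : Set.EqOn g 0 (Set.Iio x) := fun t ht =>
    Function.support_subset_iff'.1 hA t (Set.notMem_Ici.2 (ht.trans (Set.notMem_Ici.1 hx)))
  rw [liouvilleIntegral_congr hgx, liouvilleIntegral, zero_convolution, Pi.zero_apply]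

lemma mul_rlKernel_eq_mul_indicator (hA : Function.support g ⊆ Set.Ici A) {x R : ℝ}
    (hx : x ≤ A + R) (t : ℝ) :
    g t * rlKernel γ (x - t) = g t * (Set.Iic R).indicator (rlKernel γ) (x - t) := by
  by_cases ht : t ∈ Function.support g
  · have : x - t ∈ Set.Iic R := Set.mem_Iic.2 (by linarith [Set.mem_Ici.1 (hA ht)])
    rw [Set.indicator_of_mem this]
  · rw [Function.notMem_support.1 ht, zero_mul, zero_mul]

lemma ae_convolutionExistsAt_rlKernel (hγ : 0 < γ.re) (hg : Integrable g)
    (hA : Function.support g ⊆ Set.Ici A) :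
    ∀ᵐ x, ConvolutionExistsAt g (rlKernel γ) x (mul ℝ ℂ) := by
  have htrunc (n : ℕ) := hg.ae_convolution_exists (mul ℝ ℂ)
    (integrable_indicator_Iic_rlKernel hγ n)
  filter_upwards [ae_all_iff.2 htrunc] with x hx
  obtain ⟨n, hn⟩ := exists_nat_ge (x - A)
  exact (hx n).congr (.of_forall fun t =>
    (mul_rlKernel_eq_mul_indicator hA (sub_le_iff_le_add'.1 hn) t).symm)

lemma integrableOn_liouvilleIntegral (hγ : 0 < γ.re) (hg : Integrable g)
    (hA : Function.support g ⊆ Set.Ici A) (X : ℝ) :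
    IntegrableOn (liouvilleIntegral γ g) (Set.Iic X) := by
  have htrunc := hg.integrable_convolution (mul ℝ ℂ)
    (integrable_indicator_Iic_rlKernel hγ (X - A))
  refine htrunc.integrableOn.congr_fun (fun x (hx : x ≤ X) => ?_) measurableSet_Iic
  exact integral_congr_ae (.of_forall fun t =>
    (mul_rlKernel_eq_mul_indicator hA (by linarith) t).symm)

lemma convolutionExists_rlKernel_of_one_le_re (hγ : 1 ≤ γ.re) (hg : Integrable g)
    (hA : Function.support g ⊆ Set.Ici A) : ConvolutionExists g (rlKernel γ) (mul ℝ ℂ) := by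
  intro x
  have hmeas : AEStronglyMeasurable (fun t => g t * rlKernel γ (x - t)) :=
    hg.aestronglyMeasurable.mul
      ((measurable_rlKernel γ).comp (measurable_const.sub measurable_id)).aestronglyMeasurable
  refine (hg.norm.mul_const (‖Complex.Gamma γ‖⁻¹ * |x - A| ^ (γ.re - 1))).mono' hmeas
    (.of_forall fun t => ?_)
  rw [mul_apply', norm_mul]
  by_cases ht : t ∈ Function.support g
  · have htx : x - t ≤ |x - A| := (sub_le_sub_left (hA ht) x).trans (le_abs_self _)
    gcongr
    exact norm_rlKernel_le hγ (abs_nonneg _) htx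
  · rw [Function.notMem_support.1 ht, norm_zero, zero_mul, zero_mul]

lemma liouvilleIntegral_liouvilleIntegral (hγ : 0 < γ.re) (hδ : 0 < δ.re)
    (hγδ : 1 ≤ (γ + δ).re) (hg : Integrable g) (hA : Function.support g ⊆ Set.Ici A) :
    liouvilleIntegral δ (liouvilleIntegral γ g) = liouvilleIntegral (γ + δ) g := by
  funext x
  obtain ⟨C, hC⟩ := exists_norm_rlKernel_convolution_eq hγ hδ
  have hdom : ConvolutionExistsAt (‖g ·‖) ((‖rlKernel γ ·‖) ⋆[mul ℝ ℝ] (‖rlKernel δ ·‖)) x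
      (mul ℝ ℝ) := by
    refine ((convolutionExists_rlKernel_of_one_le_re hγδ hg hA x).norm.const_mul C).congr
      (.of_forall fun t => ?_)
    simp only [mul_apply', hC, norm_mul, mul_left_comm]
  rw [liouvilleIntegral, liouvilleIntegral, liouvilleIntegral, ← rlKernel_convolution hγ hδ]
  exact convolution_assoc (mul ℝ ℂ) (mul ℝ ℂ) (mul ℝ ℂ) (mul ℝ ℂ) (fun u v w => mul_assoc u v w)
    hg.aestronglyMeasurable (measurable_rlKernel γ).aestronglyMeasurable
    (measurable_rlKernel δ).aestronglyMeasurable (ae_convolutionExistsAt_rlKernel hγ hg hA)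
    (.of_forall fun y => (convolutionExists_rlKernel hγ hδ y).norm.congr
      (.of_forall fun _ => norm_mul _ _)) hdom

lemma liouvilleIntegral_one (g : ℝ → ℂ) (x : ℝ) :
    liouvilleIntegral 1 g x = ∫ t in Set.Iic x, g t := by
  have hkernel (t : ℝ) : g t * rlKernel 1 (x - t) = (Set.Iio x).indicator g t := by
    by_cases ht : t < x
    · simp [rlKernel_of_pos 1 (sub_pos.2 ht), ht]
    · simp [rlKernel_of_nonpos 1 (sub_nonpos.2 (not_lt.1 ht)), ht]
  simp only [liouvilleIntegral_apply, hkernel]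
  rw [integral_indicator measurableSet_Iio, integral_Iic_eq_integral_Iio]

lemma liouvilleIntegral_add_one (hγ : 0 < γ.re) (hg : Integrable g)
    (hA : Function.support g ⊆ Set.Ici A) (x : ℝ) :
    liouvilleIntegral (γ + 1) g x = ∫ t in A..x, liouvilleIntegral γ g t := by
  have hint := integrableOn_liouvilleIntegral hγ hg hA
  have hpast : ∫ t in Set.Iic A, liouvilleIntegral γ g t = 0 := by
    rw [integral_Iic_eq_integral_Iio]
    refine setIntegral_eq_zero_of_forall_eq_zero fun t (ht : t < A) => ?_
    exact Function.support_subset_iff'.1 (support_liouvilleIntegral_subset γ hA) t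
      (Set.notMem_Ici.2 ht)
  rw [← liouvilleIntegral_liouvilleIntegral hγ (by simp) (by simpa using hγ.le) hg hA,
    liouvilleIntegral_one, ← intervalIntegral.integral_Iic_sub_Iic (hint A) (hint x), hpast,
    sub_zero]

lemma locallyIntegrable_liouvilleIntegral (hγ : 0 < γ.re) (hg : Integrable g)
    (hA : Function.support g ⊆ Set.Ici A) : LocallyIntegrable (liouvilleIntegral γ g) := fun x =>
  ⟨Set.Iic (x + 1), Iic_mem_nhds (lt_add_one x), integrableOn_liouvilleIntegral hγ hg hA _⟩

lemma ae_hasDerivAt_liouvilleIntegral_add_one (hγ : 0 < γ.re) (hg : Integrable g)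
    (hA : Function.support g ⊆ Set.Ici A) :
    ∀ᵐ x, HasDerivAt (liouvilleIntegral (γ + 1) g) (liouvilleIntegral γ g x) x := by
  rw [funext (liouvilleIntegral_add_one hγ hg hA)]
  filter_upwards [LocallyIntegrable.ae_hasDerivAt_integral
    (locallyIntegrable_liouvilleIntegral hγ hg hA)] with x hx
  exact hx A

lemma continuous_liouvilleIntegral (hγ : 1 < γ.re) (hg : Integrable g)
    (hA : Function.support g ⊆ Set.Ici A) : Continuous (liouvilleIntegral γ g) := by
  have hγ' : 0 < (γ - 1).re := by simpa using hγ
  rw [← sub_add_cancel γ 1, funext (liouvilleIntegral_add_one hγ' hg hA)]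
  exact intervalIntegral.continuous_primitive
    (fun _ X => ((integrableOn_liouvilleIntegral hγ' hg hA _).mono_set
      Set.Icc_subset_Iic_self).intervalIntegrable) A

lemma hasDerivAt_liouvilleIntegral_add_one (hγ : 1 < γ.re) (hg : Integrable g)
    (hA : Function.support g ⊆ Set.Ici A) (x : ℝ) :
    HasDerivAt (liouvilleIntegral (γ + 1) g) (liouvilleIntegral γ g x) x := by
  rw [funext (liouvilleIntegral_add_one (zero_lt_one.trans hγ) hg hA)]
  exact (continuous_liouvilleIntegral hγ hg hA).integral_hasStrictDerivAt A x |>.hasDerivAt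

end Liouville

/-- The function `f` on `[a, b]` in the new variable `u = φ t`, extended by zero to the line. It
turns fractional integration with respect to `φ` into ordinary fractional integration. -/
def timeChange (φ : ℝ → ℝ) (a b : ℝ) (f : ℝ → ℂ) : ℝ → ℂ :=
  (Set.Icc (φ a) (φ b)).indicator (f ∘ Function.invFunOn φ (Set.Icc a b))

section TimeChange

variable {φ : ℝ → ℝ} {a b t x : ℝ} {f F H : ℝ → ℂ} {γ δ : ℂ}

lemma support_timeChange_subset (φ : ℝ → ℝ) (a b : ℝ) (f : ℝ → ℂ) :
    Function.support (timeChange φ a b f) ⊆ Set.Ici (φ a) :=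
  Set.support_indicator_subset.trans Set.Icc_subset_Ici_self

lemma timeChange_apply (hφ : StrictMonoOn φ (Set.Icc a b)) (ht : t ∈ Set.Icc a b) :
    timeChange φ a b f (φ t) = f t := by
  rw [timeChange, Set.indicator_of_mem (hφ.monotoneOn.mapsTo_Icc ht), Function.comp_apply,
    hφ.injOn.leftInvOn_invFunOn ht]

lemma timeChange_eq_indicator (hab : a ≤ b) (hφ : ContinuousOn φ (Set.Icc a b))
    (hmono : StrictMonoOn φ (Set.Icc a b)) (hF : Set.EqOn F (H ∘ φ) (Set.Icc a b)) :
    timeChange φ a b F = (Set.Icc (φ a) (φ b)).indicator H := by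
  funext u
  by_cases hu : u ∈ Set.Icc (φ a) (φ b)
  · obtain ⟨t, ht, rfl⟩ := intermediate_value_Icc hab hφ hu
    rw [timeChange_apply hmono ht, Set.indicator_of_mem hu, hF ht, Function.comp_apply]
  · rw [timeChange, Set.indicator_of_notMem hu, Set.indicator_of_notMem hu]

lemma strictMonoOn_Icc_of_deriv_pos (hφ : ContinuousOn φ (Set.Icc a b))
    (hφ' : ∀ t ∈ Set.Ioo a b, 0 < deriv φ t) : StrictMonoOn φ (Set.Icc a b) :=
  strictMonoOn_of_deriv_pos (convex_Icc a b) hφ (by rwa [interior_Icc])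

lemma integrable_timeChange (hab : a ≤ b) (hφ : ContinuousOn φ (Set.Icc a b))
    (hφ' : ∀ t ∈ Set.Ioo a b, 0 < deriv φ t)
    (hf : IntegrableOn (fun t => ((deriv φ t : ℝ) : ℂ) * f t) (Set.Icc a b)) :
    Integrable (timeChange φ a b f) := by
  have hderiv (t) (ht : t ∈ Set.Ioo a b) : HasDerivAt φ (deriv φ t) t :=
    (differentiableAt_of_deriv_ne_zero (hφ' t ht).ne').hasDerivAt
  have hon : IntegrableOn (timeChange φ a b f) (Set.Icc (φ a) (φ b)) := by
    rw [← integrableOn_Icc_deriv_smul_iff_of_deriv_nonneg hφ hderiv (fun t ht => (hφ' t ht).le) hab]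
    refine hf.congr_fun (fun t ht => ?_) measurableSet_Icc
    simp only [timeChange_apply (strictMonoOn_Icc_of_deriv_pos hφ hφ') ht, Complex.real_smul]
  exact hon.integrable_of_forall_notMem_eq_zero fun u hu => Set.indicator_of_notMem hu _

lemma RLI_eq_liouvilleIntegral_timeChange (γ : ℂ) (hφ : ContinuousOn φ (Set.Icc a b))
    (hφ' : ∀ t ∈ Set.Ioo a b, 0 < deriv φ t) (f : ℝ → ℂ) (hx : x ∈ Set.Icc a b) :
    RLI γ a φ f x = liouvilleIntegral γ (timeChange φ a b f) (φ x) := by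
  have hmono := strictMonoOn_Icc_of_deriv_pos hφ hφ'
  have hsub : Set.Icc a x ⊆ Set.Icc a b := Set.Icc_subset_Icc_right hx.2
  have hIoo : Set.Ioo a x ⊆ Set.Ioo a b := Set.Ioo_subset_Ioo_right hx.2
  let I (u : ℝ) : ℂ := timeChange φ a b f u * rlKernel γ (φ x - u)
  have hI (u) (hu : u ∉ Set.Icc (φ a) (φ x)) : I u = 0 := by
    by_cases hau : φ a ≤ u
    · have hxu : φ x - u ≤ 0 := sub_nonpos.2 (not_le.1 fun h => hu ⟨hau, h⟩).le
      rw [show I u = _ * _ from rfl, rlKernel_of_nonpos γ hxu, mul_zero]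
    · rw [show I u = _ * _ from rfl, Function.support_subset_iff'.1
        (support_timeChange_subset φ a b f) u hau, zero_mul]
  have hpull (t) (ht : t ∈ Set.Ioo a x) : deriv φ t • I (φ t) = (Complex.Gamma γ)⁻¹ *
      (((deriv φ t : ℝ) : ℂ) * ((φ x - φ t : ℝ) : ℂ) ^ (γ - 1) * f t) := by
    have hpos : 0 < φ x - φ t := sub_pos.2 (hmono (hsub ⟨ht.1.le, ht.2.le⟩) hx ht.2)
    rw [show I (φ t) = _ * _ from rfl, timeChange_apply hmono (hsub ⟨ht.1.le, ht.2.le⟩),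
      rlKernel_of_pos γ hpos, Complex.real_smul]
    ring
  calc RLI γ a φ f x
      = ∫ t in Set.Ioo a x, deriv φ t • I (φ t) := by
        rw [RLI, intervalIntegral.integral_of_le hx.1, integral_Ioc_eq_integral_Ioo,
          ← integral_const_mul, setIntegral_congr_fun measurableSet_Ioo hpull]
    _ = ∫ u in Set.Icc (φ a) (φ x), I u := by
        rw [← integral_Icc_eq_integral_Ioo]
        exact integral_Icc_deriv_smul_of_deriv_nonneg (hφ.mono hsub)
          (fun t ht => (differentiableAt_of_deriv_ne_zero (hφ' t (hIoo ht)).ne').hasDerivAt)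
          (fun t ht => (hφ' t (hIoo ht)).le) hx.1
    _ = liouvilleIntegral γ (timeChange φ a b f) (φ x) :=
        setIntegral_eq_integral_of_forall_compl_eq_zero hI

lemma RLI_RLI_eq_liouvilleIntegral_timeChange (hγ : 0 < γ.re) (hδ : 0 < δ.re)
    (hγδ : 1 ≤ (γ + δ).re) (hφ : ContinuousOn φ (Set.Icc a b))
    (hφ' : ∀ t ∈ Set.Ioo a b, 0 < deriv φ t)
    (hf : IntegrableOn (fun t => ((deriv φ t : ℝ) : ℂ) * f t) (Set.Icc a b))
    (hx : x ∈ Set.Icc a b) :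
    RLI δ a φ (RLI γ a φ f) x = liouvilleIntegral (γ + δ) (timeChange φ a b f) (φ x) := by
  have hab := hx.1.trans hx.2
  have hmono := strictMonoOn_Icc_of_deriv_pos hφ hφ'
  have hsupp := support_timeChange_subset φ a b f
  have hinner : Set.EqOn (timeChange φ a b (RLI γ a φ f))
      (liouvilleIntegral γ (timeChange φ a b f)) (Set.Iio (φ x)) := by
    rw [timeChange_eq_indicator hab hφ hmono fun t ht =>
      RLI_eq_liouvilleIntegral_timeChange γ hφ hφ' f ht]
    intro u hu
    by_cases hau : φ a ≤ u
    · have hxb : φ x ≤ φ b := hmono.monotoneOn hx (Set.right_mem_Icc.2 hab) hx.2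
      exact Set.indicator_of_mem (Set.mem_Icc.2 ⟨hau, hu.le.trans hxb⟩) _
    · rw [Set.indicator_of_notMem fun h => hau h.1, Function.support_subset_iff'.1
        (support_liouvilleIntegral_subset γ hsupp) u hau]
  rw [RLI_eq_liouvilleIntegral_timeChange δ hφ hφ' _ hx, liouvilleIntegral_congr hinner,
    liouvilleIntegral_liouvilleIntegral hγ hδ hγδ (integrable_timeChange hab hφ hφ' hf) hsupp]

lemma phiD_eq_of_hasDerivAt {c : ℂ} (hx : deriv φ x ≠ 0) (hF : F =ᶠ[𝓝 x] H ∘ φ)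
    (hH : HasDerivAt H c (φ x)) : phiD φ F x = c := by
  have hφx : HasDerivAt φ (deriv φ x) x := (differentiableAt_of_deriv_ne_zero hx).hasDerivAt
  have hderiv := (hH.scomp x hφx).congr_of_eventuallyEq hF
  rw [phiD, hderiv.deriv, Complex.real_smul, inv_mul_cancel_left₀ (Complex.ofReal_ne_zero.2 hx)]

lemma eqOn_phiD_iterate_of_eqOn_liouvilleIntegral {s : Set ℝ} {g : ℝ → ℂ} {A : ℝ}
    (hs : IsOpen s) (hφ' : ∀ t ∈ s, deriv φ t ≠ 0) (hγ : 1 < γ.re) (hg : Integrable g)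
    (hA : Function.support g ⊆ Set.Ici A) (n : ℕ)
    (hF : Set.EqOn F (liouvilleIntegral (γ + n) g ∘ φ) s) :
    Set.EqOn ((phiD φ)^[n] F) (liouvilleIntegral γ g ∘ φ) s := by
  induction n generalizing F with
  | zero => simpa using hF
  | succ n ih =>
    refine ih fun x hx => phiD_eq_of_hasDerivAt (hφ' x hx)
      (hF.eventuallyEq_of_mem (hs.mem_nhds hx)) ?_
    rw [Nat.cast_succ, ← add_assoc]
    refine hasDerivAt_liouvilleIntegral_add_one ?_ hg hA (φ x)
    rw [Complex.add_re, Complex.natCast_re]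
    exact lt_add_of_lt_of_nonneg hγ n.cast_nonneg

lemma ae_comp_of_ae_of_deriv_ne_zero {s : Set ℝ} {p : ℝ → Prop} (hs : MeasurableSet s)
    (hinj : Set.InjOn φ s) (hφ' : ∀ t ∈ s, deriv φ t ≠ 0) (hp : ∀ᵐ u, p u) :
    ∀ᵐ t, t ∈ s → p (φ t) := by
  have hdiff (t) (ht : t ∈ s) : HasDerivAt φ (deriv φ t) t :=
    (differentiableAt_of_deriv_ne_zero (hφ' t ht)).hasDerivAt
  obtain ⟨N, hpN, hN, hN0⟩ := exists_measurable_superset_of_null (ae_iff.1 hp)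
  have hcont : ContinuousOn φ s := fun t ht => (hdiff t ht).continuousAt.continuousWithinAt
  have hnull : ∫⁻ t in s, ENNReal.ofReal |deriv φ t| * N.indicator 1 (φ t) = 0 := by
    rw [← lintegral_image_eq_lintegral_abs_deriv_mul hs
      (fun t ht => (hdiff t ht).hasDerivWithinAt) hinj, lintegral_indicator_one hN]
    exact Measure.absolutelyContinuous_restrict hN0
  have hmeas : AEMeasurable (fun t => ENNReal.ofReal |deriv φ t| * N.indicator 1 (φ t))
      (volume.restrict s) :=
    (measurable_deriv φ).abs.ennreal_ofReal.aemeasurable.mul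
      ((measurable_one.indicator hN).comp_aemeasurable (hcont.aemeasurable hs))
  rw [lintegral_eq_zero_iff' hmeas, EventuallyEq, ae_restrict_iff' hs] at hnull
  filter_upwards [hnull] with t ht hts
  by_contra hpt
  have hpos : ENNReal.ofReal |deriv φ t| ≠ 0 :=
    (ENNReal.ofReal_pos.2 (abs_pos.2 (hφ' t hts))).ne'
  exact hpos (by simpa [Set.indicator_of_mem (hpN hpt)] using ht hts)

lemma IsC1Pos.continuousOn (hφ : IsC1Pos φ a b) : ContinuousOn φ (Set.Icc a b) := fun t ht =>
  (hφ.deriv_at t ht).continuousAt.continuousWithinAt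

lemma IsC1Pos.integrableOn_deriv_mul (hφ : IsC1Pos φ a b) (hf : IntegrableOn f (Set.Icc a b)) :
    IntegrableOn (fun t => ((deriv φ t : ℝ) : ℂ) * f t) (Set.Icc a b) :=
  hf.continuousOn_mul (Complex.continuous_ofReal.comp_continuousOn hφ.continuous_deriv)
    isCompact_Icc

lemma rlN_sub_re_pos {β : ℂ} (hβ : 0 ≤ β.re) : 0 < ((rlN β : ℂ) - β).re := by
  rw [Complex.sub_re, Complex.natCast_re, sub_pos, rlN, Nat.cast_succ, ← Int.cast_natCast,
    Int.toNat_of_nonneg (Int.floor_nonneg.2 hβ)]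
  exact Int.lt_floor_add_one _

lemma eqOn_phiD_iterate_RLI_RLI {α β : ℂ} (hβ : 0 ≤ β.re) (hαβ : β.re < α.re) (hab : a ≤ b)
    (hφ : ContinuousOn φ (Set.Icc a b)) (hφ' : ∀ t ∈ Set.Ioo a b, 0 < deriv φ t)
    (hf : IntegrableOn (fun t => ((deriv φ t : ℝ) : ℂ) * f t) (Set.Icc a b)) :
    Set.EqOn ((phiD φ)^[⌊β.re⌋.toNat] (RLI (rlN β - β) a φ (RLI α a φ f)))
      (liouvilleIntegral (α - β + 1) (timeChange φ a b f) ∘ φ) (Set.Ioo a b) := by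
  have hγ : 1 < (α - β + 1).re := by simpa using hαβ
  have horder : α + (rlN β - β) = α - β + 1 + (⌊β.re⌋.toNat : ℕ) := by
    rw [rlN, Nat.cast_succ]
    ring
  have horder_re : 1 ≤ (α + (rlN β - β)).re := by
    rw [horder, Complex.add_re, Complex.natCast_re]
    exact le_add_of_le_of_nonneg hγ.le (Nat.cast_nonneg _)
  refine eqOn_phiD_iterate_of_eqOn_liouvilleIntegral isOpen_Ioo (fun t ht => (hφ' t ht).ne') hγ
    (integrable_timeChange hab hφ hφ' hf) (support_timeChange_subset φ a b f) _ fun x hx => ?_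
  rw [RLI_RLI_eq_liouvilleIntegral_timeChange (hβ.trans_lt hαβ) (rlN_sub_re_pos hβ) horder_re
    hφ hφ' hf (Set.Ioo_subset_Icc_self hx), horder, Function.comp_apply]

end TimeChange

end FracDE

open FracDE in
theorem statement2_general (α β : ℂ) (hβ : 0 ≤ β.re) (hαβ : β.re < α.re)
    (a b : ℝ) (hab : a ≤ b) (φ : ℝ → ℝ) (hφ : ContinuousOn φ (Set.Icc a b))
    (hφ' : ∀ t ∈ Set.Ioo a b, 0 < deriv φ t)
    (f : ℝ → ℂ) (hf : IntegrableOn (fun t => ((deriv φ t : ℝ) : ℂ) * f t) (Set.Icc a b)) :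
    ∀ᵐ x ∂(volume : Measure ℝ), x ∈ Set.Icc a b →
      RLD β a φ (RLI α a φ f) x = RLI (α - β) a φ f x := by
  have hγ : 0 < (α - β).re := by simpa using hαβ
  have hg := integrable_timeChange hab hφ hφ' hf
  have hiter := eqOn_phiD_iterate_RLI_RLI hβ hαβ hab hφ hφ' hf
  have hlast := ae_comp_of_ae_of_deriv_ne_zero measurableSet_Ioo
    ((strictMonoOn_Icc_of_deriv_pos hφ hφ').injOn.mono Set.Ioo_subset_Icc_self)
    (fun t ht => (hφ' t ht).ne')
    (ae_hasDerivAt_liouvilleIntegral_add_one hγ hg (support_timeChange_subset φ a b f))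
  filter_upwards [hlast, Ioo_ae_eq_Icc (a := a) (b := b).mem_iff] with x hx hmem hxI
  have hxo : x ∈ Set.Ioo a b := hmem.2 hxI
  rw [RLI_eq_liouvilleIntegral_timeChange _ hφ hφ' f hxI, RLD]
  conv_lhs => rw [rlN, Function.iterate_succ_apply']
  exact phiD_eq_of_hasDerivAt (hφ' x hxo).ne'
    (hiter.eventuallyEq_of_mem (isOpen_Ioo.mem_nhds hxo)) (hx hxo)

/-- For `Re α > Re β > 0` and `f ∈ L¹(a,b)`,
`D_{a+}^{β,φ} I_{a+}^{α,φ} f = I_{a+}^{α−β,φ} f` a.e. on `[a,b]`. -/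
theorem statement2 (α β : ℂ) (hβ : 0 < β.re) (hαβ : β.re < α.re)
    (a b : ℝ) (hab : a < b) (φ : ℝ → ℝ) (hφ : FracDE.IsC1Pos φ a b)
    (f : ℝ → ℂ) (hf : MeasureTheory.IntegrableOn f (Set.Icc a b)) :
    ∀ᵐ x ∂(volume : Measure ℝ), x ∈ Set.Icc a b →
      FracDE.RLD β a φ (FracDE.RLI α a φ f) x = FracDE.RLI (α - β) a φ f x :=
  statement2_general α β hβ.le hαβ a b hab.le φ hφ.continuousOn
    (fun t ht => hφ.deriv_pos t (Set.Ioo_subset_Icc_self ht)) f (hφ.integrableOn_deriv_mul hf)
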